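/- Let H be a real Hilbert space, x₀ ∈ H, R > 0, and f : H → H Fréchet differentiable on the closed ball B(x₀,R) with ‖f'(x₁) − f'(x₂)‖ ≤ ω(r,‖x₁−x₂‖) whenever ‖x₁−x₀‖ ≤ r and ‖x₂−x₀‖ ≤ r, where ω(r,·) is nondecreasing and locally integrable. Fix r ∈ (0,R] and constants ν̃ with 1/√2 < ν̃ ≤ 1 and λ̃ > 0 such that for all x with ‖x−x₀‖ ≤ r and all h ≠ 0: ⟨h, f'(x)h⟩ ≥ ν̃‖h‖‖f'(x)h‖ and ‖h‖² ≤ λ̃·⟨h, f'(x)h⟩. Define μ = √(1/ν̃² − 1), Ω(r,t) = ∫₀ᵗ ω(r,τ)dτ, d(φ) = μφ + Ω(r, λ̃φ), d⁽⁰⁾(φ) = φ, d⁽ⁿ⁺¹⁾(φ) = d(d⁽ⁿ⁾(φ)), w(φ) = Σ_{n=0}^∞ d⁽ⁿ⁾(φ), let φ_* be the smallest positive root of φ = d(φ) (assumed to exist), and set a = ‖f(x₀)‖. If a < φ_* and λ̃·w(a) ≤ r, then the method of steepest descent x_{n+1} = x_n − (‖f(x_n)‖²/⟨f(x_n), f'(x_n)f(x_n)⟩)·f(x_n)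 (with x_{n+1} = x_n when f(x_n) = 0) converges to a solution x_* of f(x) = 0 with ‖x_* − x₀‖ ≤ r, and ‖x_n − x_*‖ ≤ λ̃·w(d⁽ⁿ⁾(a)) for all n. -/

import Mathlib

/-!
One step of steepest descent from a point `p` moves along `v = -Λ h`, where `h = f p` and
`Λ = ‖h‖² / ⟪h, f'(p) h⟫ ≤ lamt`, and

  `f (p + v) = (h - Λ f'(p) h) + (f (p + v) - f p - f'(p) v)`.

The choice of `Λ` and the angle condition bound the first term by `μ ‖h‖`
(`norm_sub_step_le`). The modulus `ω` of `f'` bounds the Taylor remainder by `∫₀^{‖v‖} ω`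
(`norm_taylor_remainder_le`). Together `‖f (p + v)‖ ≤ d ‖f p‖`, so by monotonicity of `d` on
`[0, ∞)` the residuals satisfy `‖f (x n)‖ ≤ d^[n] a` and the steps satisfy
`‖x (n + 1) - x n‖ ≤ lamt * d^[n] a`. Summability of the majorants keeps the iterates in the ball,
makes them Cauchy, and forces the residuals to `0`.
-/

open scoped Classical

open Filter Topology MeasureTheory
open scoped RealInnerProductSpace

/-- The linear part of one descent step has norm at most `√(1 / nu² - 1) ‖h‖`: expanding the square gives
`‖h - Λ u‖² = ‖h‖⁴ ‖u‖² / ⟪h, u⟫² - ‖h‖²`, with `u` in the role of `f' h`. -/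
lemma norm_sub_step_le {H : Type*} [NormedAddCommGroup H] [InnerProductSpace ℝ H]
    (h u : H) (nu : ℝ) (hnu : 0 < nu) (hpos : 0 < ⟪h, u⟫)
    (hac : nu * ‖h‖ * ‖u‖ ≤ ⟪h, u⟫) :
    ‖h - (‖h‖ ^ 2 / ⟪h, u⟫) • u‖ ≤ Real.sqrt (1 / nu ^ 2 - 1) * ‖h‖ := by
  have key : ‖h - (‖h‖ ^ 2 / ⟪h, u⟫) • u‖ ^ 2 ≤ (1 / nu ^ 2 - 1) * ‖h‖ ^ 2 := by
    rw [norm_sub_sq_real, inner_smul_right, norm_smul, mul_pow, Real.norm_eq_abs, sq_abs]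
    set s := ⟪h, u⟫ with hs
    have h1 : ‖h‖ ^ 2 / s * s = ‖h‖ ^ 2 := by field_simp
    have h2 : (‖h‖ * ‖u‖ / s) ^ 2 ≤ (1 / nu) ^ 2 := by
      apply pow_le_pow_left₀ (by positivity)
      rw [div_le_div_iff₀ hpos hnu]
      linarith
    have h3 : (‖h‖ ^ 2 / s) ^ 2 * ‖u‖ ^ 2 = (‖h‖ * ‖u‖ / s) ^ 2 * ‖h‖ ^ 2 := by ring
    have h4 := mul_le_mul_of_nonneg_right h2 (sq_nonneg ‖h‖)
    rw [h1, h3]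
    have h5 : (1 / nu) ^ 2 = 1 / nu ^ 2 := by ring
    rw [h5] at h4
    linarith
  have h6 := Real.sqrt_le_sqrt key
  rwa [Real.sqrt_sq (norm_nonneg _), Real.sqrt_mul' _ (sq_nonneg _),
    Real.sqrt_sq (norm_nonneg _)] at h6

/-- Taylor remainder bound for a derivative with modulus of continuity `w`, which may itself be
discontinuous. -/
lemma norm_taylor_remainder_le {H : Type*} [NormedAddCommGroup H] [NormedSpace ℝ H]
    [CompleteSpace H] (f : H → H) (f' : H → H →L[ℝ] H) (w : ℝ → ℝ)
    (hw : MonotoneOn w (Set.Ici 0)) (p v : H)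
    (hf : ∀ t ∈ Set.Icc (0 : ℝ) 1, HasFDerivAt f (f' (p + t • v)) (p + t • v))
    (hlip : ∀ t ∈ Set.Icc (0 : ℝ) 1, ‖f' (p + t • v) - f' p‖ ≤ w (t * ‖v‖)) :
    ‖f (p + v) - f p - f' p v‖ ≤ ∫ τ in (0 : ℝ)..‖v‖, w τ := by
  set g : ℝ → H := fun t => f (p + t • v) - t • f' p v with hg
  have hder : ∀ t ∈ Set.Icc (0 : ℝ) 1, HasDerivAt g ((f' (p + t • v) - f' p) v) t := by
    intro t ht
    have h1 : HasDerivAt (fun t : ℝ => p + t • v) v t := by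
      simpa using ((hasDerivAt_id t).smul_const v).const_add p
    have h2 := (hf t ht).comp_hasDerivAt t h1
    have h3 : HasDerivAt (fun t : ℝ => t • f' p v) (f' p v) t := by
      simpa using (hasDerivAt_id t).smul_const (f' p v)
    exact h2.sub h3
  have hbd : ∀ t ∈ Set.Icc (0 : ℝ) 1, ‖deriv g t‖ ≤ w (t * ‖v‖) * ‖v‖ := by
    intro t ht
    rw [(hder t ht).deriv]
    exact ((f' (p + t • v) - f' p).le_opNorm v).trans
      (mul_le_mul_of_nonneg_right (hlip t ht) (norm_nonneg v))
  have hwint : IntervalIntegrable (fun t => w (t * ‖v‖) * ‖v‖) volume 0 1 := by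
    apply MonotoneOn.intervalIntegrable
    rw [Set.uIcc_of_le zero_le_one]
    intro s hs t ht hst
    have hv := norm_nonneg v
    exact mul_le_mul_of_nonneg_right
      (hw (mul_nonneg hs.1 hv) (mul_nonneg ht.1 hv) (mul_le_mul_of_nonneg_right hst hv)) hv
  -- `f'` is not assumed measurable, but a derivative along a line always is.
  have hgint : IntervalIntegrable (deriv g) volume 0 1 := by
    refine hwint.mono_fun' (stronglyMeasurable_deriv g).aestronglyMeasurable ?_
    filter_upwards [ae_restrict_mem measurableSet_uIoc] with t ht
    rw [Set.uIoc_of_le zero_le_one] at ht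
    exact hbd t ⟨ht.1.le, ht.2⟩
  have hftc : ∫ t in (0 : ℝ)..1, deriv g t = g 1 - g 0 := by
    refine intervalIntegral.integral_eq_sub_of_hasDerivAt (fun t ht => ?_) hgint
    rw [Set.uIcc_of_le zero_le_one] at ht
    exact (hder t ht).differentiableAt.hasDerivAt
  have hval : g 1 - g 0 = f (p + v) - f p - f' p v := by
    simp only [hg, one_smul, zero_smul, add_zero, sub_zero]
    abel
  have hle := intervalIntegral.norm_integral_le_of_norm_le (μ := volume) zero_le_one
    (Filter.Eventually.of_forall fun t (ht : t ∈ Set.Ioc (0 : ℝ) 1) => hbd t ⟨ht.1.le, ht.2⟩) hwint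
  rw [hftc, hval, intervalIntegral.integral_mul_const, mul_comm,
    intervalIntegral.mul_integral_comp_mul_right] at hle
  simpa using hle

/-- convergence of the method of steepest descent
`x_{n+1} = xₙ − (‖f(xₙ)‖²/⟨f(xₙ), f'(xₙ)f(xₙ)⟩)·f(xₙ)` on a real Hilbert space. -/
theorem steepest_descent_convergence
    {H : Type*} [NormedAddCommGroup H] [InnerProductSpace ℝ H] [CompleteSpace H]
    (x₀ : H) (R : ℝ) (hR : 0 < R)
    (f : H → H) (f' : H → H →L[ℝ] H)
    (hf : ∀ x : H, ‖x - x₀‖ ≤ R → HasFDerivAt f (f' x) x)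
    (ω : ℝ → ℝ → ℝ)
    (hω0 : ∀ ρ t : ℝ, 0 ≤ t → 0 ≤ ω ρ t)
    (hωmono : ∀ ρ : ℝ, MonotoneOn (ω ρ) (Set.Ici 0))
    (hωint : ∀ ρ t : ℝ, IntervalIntegrable (ω ρ) volume 0 t)
    (hlip : ∀ ρ : ℝ, ∀ x₁ x₂ : H, ‖x₁ - x₀‖ ≤ ρ → ‖x₂ - x₀‖ ≤ ρ →
      ‖f' x₁ - f' x₂‖ ≤ ω ρ ‖x₁ - x₂‖)
    (r : ℝ) (hr0 : 0 < r) (hrR : r ≤ R)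
    (nu lamt : ℝ) (hnu0 : 1 / Real.sqrt 2 < nu) (hnu1 : nu ≤ 1) (hlamt : 0 < lamt)
    (hacute : ∀ x : H, ‖x - x₀‖ ≤ r → ∀ h : H, h ≠ 0 →
      nu * ‖h‖ * ‖(f' x) h‖ ≤ ⟪h, (f' x) h⟫)
    (hbound : ∀ x : H, ‖x - x₀‖ ≤ r → ∀ h : H, h ≠ 0 →
      ‖h‖ ^ 2 ≤ lamt * ⟪h, (f' x) h⟫)
    (μ : ℝ) (hμ : μ = Real.sqrt (1 / nu ^ 2 - 1))
    (d : ℝ → ℝ)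
    (hd : ∀ φ : ℝ, d φ = μ * φ + ∫ τ in (0:ℝ)..(lamt * φ), ω r τ)
    (φs : ℝ) (hφs_pos : 0 < φs) (hφs_root : d φs = φs)
    (hφs_min : ∀ ψ : ℝ, 0 < ψ → d ψ = ψ → φs ≤ ψ)
    (a : ℝ) (ha : a = ‖f x₀‖) (haφs : a < φs)
    (hsum : Summable fun n : ℕ => d^[n] a)
    (hwa : lamt * ∑' n : ℕ, d^[n] a ≤ r)
    -- the method of steepest descent
    (x : ℕ → H) (hx0 : x 0 = x₀)
    (hxiter : ∀ n : ℕ, x (n + 1) =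
      if f (x n) = 0 then x n
      else x n - (‖f (x n)‖ ^ 2 / ⟪f (x n), (f' (x n)) (f (x n))⟫) • f (x n)) :
    ∃ xs : H, f xs = 0 ∧ ‖xs - x₀‖ ≤ r ∧ Tendsto x atTop (𝓝 xs) ∧
      ∀ n : ℕ, ‖x n - xs‖ ≤ lamt * ∑' k : ℕ, d^[k] (d^[n] a) := by
  have hnu : 0 < nu := lt_trans (by positivity) hnu0
  have hμ0 : 0 ≤ μ := hμ ▸ Real.sqrt_nonneg _
  have ha0 : 0 ≤ a := ha ▸ norm_nonneg _
  have hΩmono : ∀ s t : ℝ, 0 ≤ s → s ≤ t →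
      ∫ τ in (0 : ℝ)..s, ω r τ ≤ ∫ τ in (0 : ℝ)..t, ω r τ := by
    intro s t hs hst
    refine intervalIntegral.integral_mono_interval le_rfl hs hst ?_ (hωint r t)
    filter_upwards [ae_restrict_mem measurableSet_Ioc] with τ hτ
    exact hω0 r τ hτ.1.le
  have hdmono : ∀ s t : ℝ, 0 ≤ s → s ≤ t → d s ≤ d t := by
    intro s t hs hst
    rw [hd, hd]
    exact add_le_add (mul_le_mul_of_nonneg_left hst hμ0)
      (hΩmono _ _ (by positivity) (mul_le_mul_of_nonneg_left hst hlamt.le))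
  have hd0 : d 0 = 0 := by simp [hd]
  have hdn : ∀ n, 0 ≤ d^[n] a := by
    intro n
    induction n with
    | zero => exact ha0
    | succ n ih =>
      rw [Function.iterate_succ_apply', ← hd0]
      exact hdmono _ _ le_rfl ih
  have hpart : ∀ n, lamt * ∑ k ∈ Finset.range n, d^[k] a ≤ r := fun n =>
    (mul_le_mul_of_nonneg_left (hsum.sum_le_tsum _ fun k _ => hdn k) hlamt.le).trans hwa
  have hstep : ∀ n, ‖x n - x₀‖ ≤ r → ‖x (n + 1) - x n‖ ≤ lamt * ‖f (x n)‖ := by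
    intro n hn
    rw [hxiter]
    split_ifs with h0
    · simp [h0]
    · have hb := hbound (x n) hn _ h0
      have hh : 0 < ‖f (x n)‖ := norm_pos_iff.mpr h0
      have hpos : 0 < ⟪f (x n), (f' (x n)) (f (x n))⟫ :=
        pos_of_mul_pos_right (lt_of_lt_of_le (by positivity) hb) hlamt.le
      rw [sub_sub_cancel_left, norm_neg, norm_smul, Real.norm_eq_abs, abs_of_nonneg (by positivity)]
      refine mul_le_mul_of_nonneg_right ?_ hh.le
      rwa [div_le_iff₀ hpos]
  have hres : ∀ n, ‖x n - x₀‖ ≤ r → ‖x (n + 1) - x₀‖ ≤ r → ‖f (x (n + 1))‖ ≤ d ‖f (x n)‖ := by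
    intro n hn hn1
    by_cases h0 : f (x n) = 0
    · have hx : x (n + 1) = x n := by rw [hxiter, if_pos h0]
      rw [hx, h0, norm_zero, hd0]
    · have hb := hbound (x n) hn _ h0
      have hh : 0 < ‖f (x n)‖ := norm_pos_iff.mpr h0
      have hpos : 0 < ⟪f (x n), (f' (x n)) (f (x n))⟫ :=
        pos_of_mul_pos_right (lt_of_lt_of_le (by positivity) hb) hlamt.le
      have hlin := norm_sub_step_le _ _ nu hnu hpos (hacute (x n) hn _ h0)
      set v := x (n + 1) - x n with hv
      have hvx : x n + v = x (n + 1) := by rw [hv]; abel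
      have hveq : v = -((‖f (x n)‖ ^ 2 / ⟪f (x n), (f' (x n)) (f (x n))⟫) • f (x n)) := by
        rw [hv, hxiter, if_neg h0]; abel
      have hseg : ∀ t ∈ Set.Icc (0 : ℝ) 1, ‖x n + t • v - x₀‖ ≤ r := by
        intro t ht
        have hmem := (convex_closedBall x₀ r).add_smul_sub_mem
          (mem_closedBall_iff_norm.mpr hn) (mem_closedBall_iff_norm.mpr hn1) ht
        exact mem_closedBall_iff_norm.mp hmem
      have htay := norm_taylor_remainder_le f f' (ω r) (hωmono r) (x n) v
        (fun t ht => hf _ ((hseg t ht).trans hrR))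
        (fun t ht => by
          have h1 := hlip r _ _ (hseg t ht) hn
          rwa [add_sub_cancel_left, norm_smul, Real.norm_eq_abs, abs_of_nonneg ht.1] at h1)
      have hdec : f (x (n + 1)) =
          (f (x n) - (‖f (x n)‖ ^ 2 / ⟪f (x n), (f' (x n)) (f (x n))⟫) • (f' (x n)) (f (x n)))
            + (f (x n + v) - f (x n) - f' (x n) v) := by
        have hav : f' (x n) v =
            -((‖f (x n)‖ ^ 2 / ⟪f (x n), (f' (x n)) (f (x n))⟫) • (f' (x n)) (f (x n))) := by
          rw [hveq, map_neg, map_smul]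
        rw [hvx, hav]
        abel
      rw [hdec, hd, hμ]
      exact (norm_add_le _ _).trans
        (add_le_add hlin (htay.trans (hΩmono _ _ (norm_nonneg _) (hstep n hn))))
  have hind : ∀ n, ‖x n - x₀‖ ≤ lamt * ∑ k ∈ Finset.range n, d^[k] a ∧ ‖f (x n)‖ ≤ d^[n] a := by
    intro n
    induction n with
    | zero => simp [hx0, ha]
    | succ n ih =>
      have hn := ih.1.trans (hpart n)
      have h1 : ‖x (n + 1) - x₀‖ ≤ lamt * ∑ k ∈ Finset.range (n + 1), d^[k] a := by
        rw [Finset.sum_range_succ, mul_add, add_comm (lamt * _), ← sub_add_sub_cancel (x (n + 1)) (x n) x₀]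
        exact (norm_add_le _ _).trans
          (add_le_add ((hstep n hn).trans (mul_le_mul_of_nonneg_left ih.2 hlamt.le)) ih.1)
      refine ⟨h1, ?_⟩
      rw [Function.iterate_succ_apply']
      exact (hres n hn (h1.trans (hpart _))).trans (hdmono _ _ (norm_nonneg _) ih.2)
  have hball : ∀ n, ‖x n - x₀‖ ≤ r := fun n => (hind n).1.trans (hpart n)
  have hdist : ∀ n, dist (x n) (x n.succ) ≤ lamt * d^[n] a := by
    intro n
    rw [dist_comm, dist_eq_norm]
    exact (hstep n (hball n)).trans (mul_le_mul_of_nonneg_left (hind n).2 hlamt.le)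
  have hsum' : Summable fun n : ℕ => lamt * d^[n] a := hsum.mul_left lamt
  obtain ⟨xs, hxs⟩ := cauchySeq_tendsto_of_complete
    (cauchySeq_of_dist_le_of_summable _ hdist hsum')
  have hxsball : ‖xs - x₀‖ ≤ r :=
    le_of_tendsto (hxs.sub_const x₀).norm (Filter.Eventually.of_forall hball)
  refine ⟨xs, ?_, hxsball, hxs, fun n => ?_⟩
  · have h1 : Tendsto (fun n => f (x n)) atTop (𝓝 (f xs)) :=
      (hf xs (hxsball.trans hrR)).continuousAt.tendsto.comp hxs
    have h2 : Tendsto (fun n => f (x n)) atTop (𝓝 0) :=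
      squeeze_zero_norm (fun n => (hind n).2) hsum.tendsto_atTop_zero
    exact tendsto_nhds_unique h1 h2
  · have h1 := dist_le_tsum_of_dist_le_of_tendsto _ hdist hsum' hxs n
    rw [dist_eq_norm, tsum_mul_left] at h1
    have h2 : ∀ k, d^[k] (d^[n] a) = d^[n + k] a := fun k => by
      rw [add_comm, Function.iterate_add_apply]
    simpa only [h2] using h1
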